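/- arXiv:2406.01051 — 3 statements merged into one kernel-verified Lean document; each statement's English description precedes it below -/
import Mathlib

section
/- Let W_m = W' + mS_N(e,s) be a fat flat subscheme of P^N as in the construction, i.e. I(W_m) = (⋂_{i=2}^N ⋂_{r=1}^{n_i} I(M_{i,r})^{m_{i,r}}) ∩ I^{(m)}, where I is the star configuration ideal, each M_{i,r} is a linear subspace of codimension i contained in one of the hyperplanes H_j, no one of the subspaces M_{i,r} and the star-configuration components contains another, and 0 ≤ m_{i,r} ≤ ⌊m/e⌋ for all i,r. Then the Waldschmidt constant of I(W_m) equals ms/e. -/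
noncomputable section

open MvPolynomial

/-- `alpha J` is the least degree of a nonzero homogeneous form in the ideal `J`. -/
def alpha {kk : Type*} [Field kk] {σ : Type*} (J : Ideal (MvPolynomial σ kk)) : ℕ :=
  sInf {d : ℕ | ∃ f ∈ J, f ≠ 0 ∧ MvPolynomial.IsHomogeneous f d}

theorem lin_induction {kk : Type*} [Field kk] {σ : Type*} {P : MvPolynomial σ kk → Prop}
    (h0 : P 0) (hX : ∀ i, P (X i)) (ha : ∀ f g, P f → P g → P (f + g))
    (hs : ∀ (a : kk) f, P f → P (a • f)) {f : MvPolynomial σ kk} (hf : f.IsHomogeneous 1) : P f := by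
  have h : f ∈ homogeneousSubmodule σ kk 1 := hf
  rw [homogeneousSubmodule_one_eq_span_X] at h
  induction h using Submodule.span_induction with
  | mem x hx => obtain ⟨i, rfl⟩ := hx; exact hX i
  | zero => exact h0
  | add x y _ _ hx hy => 
    exact ha _ _ (hx (by rw [← mem_homogeneousSubmodule, homogeneousSubmodule_one_eq_span_X]; assumption)) (hy (by rw [← mem_homogeneousSubmodule, homogeneousSubmodule_one_eq_span_X]; assumption))
  | smul a x _ hx => exact hs _ _ (hx (by rw [← mem_homogeneousSubmodule, homogeneousSubmodule_one_eq_span_X]; assumption))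

theorem exists_theta {kk : Type*} [Field kk] {σ : Type*} (A : Set (MvPolynomial σ kk))
    (hA : ∀ a ∈ A, a.IsHomogeneous 1) :
    ∃ (θ : MvPolynomial σ kk →ₐ[kk] Polynomial (MvPolynomial σ kk)),
      (∀ f t, f ∈ Ideal.span A ^ t ↔ (Polynomial.X : Polynomial (MvPolynomial σ kk)) ^ t ∣ θ f) ∧
      (∀ f ∈ A, θ f = Polynomial.X * Polynomial.C f) ∧
      (∀ f : MvPolynomial σ kk, f.IsHomogeneous 1 → f ∉ Submodule.span kk A →
        ¬ (Polynomial.X : Polynomial (MvPolynomial σ kk)) ∣ θ f) := by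
  obtain ⟨g, hg⟩ := LinearMap.exists_extend (LinearMap.id : Submodule.span kk A →ₗ[kk] _)
  have hgU : ∀ u ∈ Submodule.span kk A, ((g u : Submodule.span kk A) : MvPolynomial σ kk) = u := by
    intro u hu
    have := LinearMap.congr_fun hg ⟨u, hu⟩
    simpa using congrArg Subtype.val this
  have hUI : ∀ u ∈ Submodule.span kk A, u ∈ Ideal.span A := by
    intro u hu
    induction hu using Submodule.span_induction with
    | mem x hx => exact Ideal.subset_span hx
    | zero => exact zero_mem _
    | add x y _ _ hx hy => exact add_mem hx hy
    | smul a x _ hx => rw [MvPolynomial.smul_eq_C_mul]; exact Ideal.mul_mem_left _ _ hx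
  let q : MvPolynomial σ kk →ₗ[kk] MvPolynomial σ kk := (Submodule.subtype _).comp g
  have hqmem : ∀ f, q f ∈ Submodule.span kk A := fun f => (g f).2
  have hq : ∀ u ∈ Submodule.span kk A, q u = u := hgU
  let θ : MvPolynomial σ kk →ₐ[kk] Polynomial (MvPolynomial σ kk) :=
    aeval (fun i => Polynomial.C (X i - q (X i)) + Polynomial.X * Polynomial.C (q (X i)))
  have hlin : ∀ f : MvPolynomial σ kk, f.IsHomogeneous 1 →
      θ f = Polynomial.C (f - q f) + Polynomial.X * Polynomial.C (q f) := by
    intro f hf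
    refine lin_induction (P := fun f => θ f = Polynomial.C (f - q f) + Polynomial.X * Polynomial.C (q f)) ?_ ?_ ?_ ?_ hf
    · simp
    · intro i; simp [θ]
    · intro f g hf hg
      rw [map_add, hf, hg]; simp only [map_add, map_sub]; ring
    · intro a f hf
      rw [map_smul, hf, map_smul, ← smul_sub, ← Polynomial.smul_C, ← Polynomial.smul_C, smul_add,
        mul_smul_comm]
  have hA' : ∀ f ∈ A, θ f = Polynomial.X * Polynomial.C f := by
    intro f hf
    rw [hlin f (hA f hf), hq f (Submodule.subset_span hf)]; simp
  have hrees : ∀ f, θ f ∈ reesAlgebra (Ideal.span A) := by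
    intro f
    induction f using MvPolynomial.induction_on with
    | C a =>
      have : θ (C a) = algebraMap (MvPolynomial σ kk) _ (C a) := by
        rw [← MvPolynomial.algebraMap_eq, AlgHom.commutes]
        rfl
      rw [this]; exact Subalgebra.algebraMap_mem _ _
    | add f g hf hg => rw [map_add]; exact add_mem hf hg
    | mul_X f i hf =>
      rw [map_mul]
      refine mul_mem hf ?_
      simp only [θ, aeval_X]
      refine add_mem (Subalgebra.algebraMap_mem _ _) ?_
      rw [mul_comm, Polynomial.C_mul_X_eq_monomial, reesAlgebra.monomial_mem, pow_one]
      exact hUI _ (hqmem _)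
  have heval : ∀ f, (θ f).eval 1 = f := by
    intro f
    induction f using MvPolynomial.induction_on with
    | C a =>
      have : θ (C a) = algebraMap (MvPolynomial σ kk) _ (C a) := by
        rw [← MvPolynomial.algebraMap_eq, AlgHom.commutes]
        rfl
      rw [this]; simp
    | add f g hf hg => rw [map_add, Polynomial.eval_add, hf, hg]
    | mul_X f i hf => rw [map_mul, Polynomial.eval_mul, hf]; simp [θ]
  refine ⟨θ, ?_, hA', ?_⟩
  · intro f t
    constructor
    · intro hf
      have h1 : (Ideal.span A).map θ ≤ Ideal.span {Polynomial.X} := by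
        rw [Ideal.map_span, Ideal.span_le]
        rintro _ ⟨a, ha, rfl⟩
        rw [SetLike.mem_coe, Ideal.mem_span_singleton, hA' a ha]
        exact dvd_mul_right _ _
      have h2 := Ideal.mem_map_of_mem θ hf
      rw [Ideal.map_pow] at h2
      have h3 := Ideal.pow_right_mono h1 t h2
      rwa [Ideal.span_singleton_pow, Ideal.mem_span_singleton] at h3
    · intro hd
      rw [Polynomial.X_pow_dvd_iff] at hd
      rw [← heval f, Polynomial.eval_eq_sum, Polynomial.sum]
      refine Ideal.sum_mem _ fun i hi => ?_
      rw [one_pow, mul_one]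
      by_cases h : i < t
      · rw [hd i h]; exact zero_mem _
      · exact Ideal.pow_le_pow_right (not_lt.mp h) (hrees f i)
  · intro f hf hfU hd
    rw [hlin f hf, Polynomial.X_dvd_iff] at hd
    simp at hd
    apply hfU
    rw [sub_eq_zero.mp hd]
    exact hqmem f

theorem div_notMem {kk : Type*} [Field kk] {σ : Type*} (A : Set (MvPolynomial σ kk))
    (hA : ∀ a ∈ A, a.IsHomogeneous 1) (l g : MvPolynomial σ kk) (hl : l.IsHomogeneous 1)
    (hlA : l ∉ Submodule.span kk A) (t : ℕ) (h : l * g ∈ Ideal.span A ^ t) :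
    g ∈ Ideal.span A ^ t := by
  obtain ⟨θ, h1, h2, h3⟩ := exists_theta A hA
  rw [h1] at h ⊢
  rw [map_mul] at h
  exact Polynomial.prime_X.pow_dvd_of_dvd_mul_left _ (h3 l hl hlA) h

theorem div_mem_form {kk : Type*} [Field kk] {σ : Type*} (A : Set (MvPolynomial σ kk))
    (hA : ∀ a ∈ A, a.IsHomogeneous 1) (l g : MvPolynomial σ kk)
    (hlA : l ∈ A) (hl0 : l ≠ 0) (t : ℕ) (h : l * g ∈ Ideal.span A ^ t) :
    g ∈ Ideal.span A ^ (t - 1) := by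
  obtain ⟨θ, h1, h2, h3⟩ := exists_theta A hA
  rw [h1] at h ⊢
  rcases t with _ | t
  · simp
  rw [map_mul, h2 l hlA, pow_succ', mul_assoc] at h
  have h' := (mul_dvd_mul_iff_left Polynomial.X_ne_zero).mp h
  refine Polynomial.prime_X.pow_dvd_of_dvd_mul_left _ ?_ h'
  rw [Polynomial.X_dvd_iff]
  simpa using hl0

theorem exists_psi {kk : Type*} [Field kk] {σ : Type*} (l : MvPolynomial σ kk)
    (hl : l.IsHomogeneous 1) (hl0 : l ≠ 0) :
    ∃ ψ : MvPolynomial σ kk →ₐ[kk] MvPolynomial σ kk, ψ l = 0 ∧ (∀ f, l ∣ f - ψ f) ∧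
      (∀ f : MvPolynomial σ kk, f.IsHomogeneous 1 → ∃ a : kk, ψ f = f - a • l) ∧
      (∀ f : MvPolynomial σ kk, f.IsHomogeneous 1 → (ψ f).IsHomogeneous 1) ∧
      (∀ f, (ψ f).totalDegree ≤ f.totalDegree) := by
  classical
  obtain ⟨p, hp⟩ : ∃ p : σ, coeff (Finsupp.single p 1) l ≠ 0 := by
    by_contra! hcon
    apply hl0
    refine MvPolynomial.ext _ _ fun d => ?_
    rw [coeff_zero]
    by_contra hd
    have key : coeff d l ≠ 0 → ∃ i, Finsupp.single i 1 = d := by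
      refine lin_induction (P := fun f => coeff d f ≠ 0 → ∃ i, Finsupp.single i 1 = d)
        ?_ ?_ ?_ ?_ hl
      · simp
      · intro i h
        rw [coeff_X'] at h
        exact ⟨i, by_contra fun h' => h (if_neg h')⟩
      · intro f g hf hg h
        rw [coeff_add] at h
        by_cases h0 : coeff d f = 0
        · exact hg fun h1 => h (by rw [h0, h1, add_zero])
        · exact hf h0
      · intro a f hf h
        rw [coeff_smul] at h
        exact hf (right_ne_zero_of_smul h)
    obtain ⟨i, rfl⟩ := key hd
    exact hd (hcon i)
  let lam : MvPolynomial σ kk → kk := fun f => coeff (Finsupp.single p 1) f / coeff (Finsupp.single p 1) l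
  let v : σ → MvPolynomial σ kk := fun i => X i - lam (X i) • l
  have hv : ∀ i, (v i).IsHomogeneous 1 := fun i =>
    (isHomogeneous_X kk i).sub (by rw [smul_eq_C_mul]; simpa using (isHomogeneous_C σ (lam (X i))).mul hl)
  have hlin : ∀ f : MvPolynomial σ kk, f.IsHomogeneous 1 → aeval v f = f - lam f • l := by
    intro f hf
    refine lin_induction (P := fun f => aeval v f = f - lam f • l) ?_ ?_ ?_ ?_ hf
    · simp [lam]
    · intro i; simp [v]
    · intro f g hf hg
      have : lam (f + g) = lam f + lam g := by simp [lam, add_div]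
      rw [map_add, hf, hg, this, add_smul]; ring
    · intro a f hf
      have : lam (a • f) = a * lam f := by simp [lam, mul_div_assoc]
      rw [map_smul, hf, this, mul_smul, smul_sub]
  refine ⟨aeval v, ?_, ?_, fun f hf => ⟨_, hlin f hf⟩, ?_, ?_⟩
  · rw [hlin l hl]; simp [lam, div_self hp]
  · intro f
    induction f using MvPolynomial.induction_on with
    | C a => simp
    | add f g hf hg => 
      rw [map_add, add_sub_add_comm]; exact dvd_add hf hg
    | mul_X f i hf =>
      rw [map_mul, aeval_X]
      have : f * X i - aeval v f * v i = (f - aeval v f) * X i + aeval v f * (C (lam (X i)) * l) := by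
        simp only [v, smul_eq_C_mul]; ring
      rw [this]
      exact dvd_add (hf.mul_right _) ((Dvd.intro_left _ rfl : l ∣ _ * l).mul_left _)
  · intro f hf
    simpa using hf.aeval v hv
  · intro f
    conv_lhs => rw [← sum_homogeneousComponent f, map_sum]
    refine totalDegree_finsetSum_le fun i hi => ?_
    have := ((homogeneousComponent_isHomogeneous i f).aeval v hv).totalDegree_le
    have h2 := Finset.mem_range.mp hi
    omega

theorem sum_contain {ι : Type*} [DecidableEq ι] (S : Finset ι) (i : ι) (hi : i ∈ S) (e : ℕ)
    (t : Finset ι → ℕ) :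
    ∑ T ∈ (S.powersetCard (e + 1)).filter (fun T => i ∈ T), t T =
      ∑ T ∈ (S.erase i).powersetCard e, t (insert i T) := by
  symm
  refine Finset.sum_bij' (fun T _ => insert i T) (fun T _ => T.erase i) ?_ ?_ ?_ ?_ ?_
  · intro T hT
    rw [Finset.mem_powersetCard] at hT
    have hiT : i ∉ T := fun h => by simpa using hT.1 h
    simp only [Finset.mem_filter, Finset.mem_powersetCard, Finset.mem_insert_self, and_true]
    refine ⟨Finset.insert_subset hi (hT.1.trans (Finset.erase_subset _ _)), ?_⟩
    rw [Finset.card_insert_of_notMem hiT, hT.2]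
  · intro T hT
    simp only [Finset.mem_filter, Finset.mem_powersetCard] at hT
    rw [Finset.mem_powersetCard]
    refine ⟨Finset.erase_subset_erase _ hT.1.1, ?_⟩
    rw [Finset.card_erase_of_mem hT.2, hT.1.2]; rfl
  · intro T hT
    rw [Finset.mem_powersetCard] at hT
    have hiT : i ∉ T := fun h => by simpa using hT.1 h
    exact Finset.erase_insert hiT
  · intro T hT
    simp only [Finset.mem_filter, Finset.mem_powersetCard] at hT
    exact Finset.insert_erase hT.2
  · intros; rfl

theorem double_count {ι : Type*} [DecidableEq ι] (S : Finset ι) (e : ℕ) (t : Finset ι → ℕ) :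
    (e + 1) * ∑ T ∈ S.powersetCard (e + 1), t T =
      ∑ i ∈ S, ∑ T ∈ (S.erase i).powersetCard e, t (insert i T) := by
  rw [Finset.sum_congr rfl fun i hi => (sum_contain S i hi e t).symm]
  simp only [Finset.sum_filter]
  rw [Finset.sum_comm, Finset.mul_sum]
  refine Finset.sum_congr rfl fun T hT => ?_
  rw [Finset.mem_powersetCard] at hT
  rw [← Finset.sum_filter, Finset.filter_mem_eq_inter, Finset.inter_eq_right.mpr hT.1]
  simp [hT.2]

theorem main_bound {kk : Type*} [Field kk] {σ ι : Type*} [DecidableEq ι] (e : ℕ) :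
    ∀ (d : ℕ) (S : Finset ι) (l : ι → MvPolynomial σ kk) (t : Finset ι → ℕ)
    (f : MvPolynomial σ kk), e + 1 ≤ S.card → (∀ i, (l i).IsHomogeneous 1) →
    (∀ T ⊆ S, T.card ≤ e + 1 → ∀ i ∈ S, i ∉ T → l i ∉ Submodule.span kk (l '' (T : Set ι))) →
    f ≠ 0 → f.totalDegree ≤ d →
    (∀ T ∈ S.powersetCard (e + 1), f ∈ Ideal.span (l '' (T : Set ι)) ^ t T) →
    ∑ T ∈ S.powersetCard (e + 1), t T ≤ (S.card - 1).choose e * d := by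
  induction e using Nat.strong_induction_on with
  | _ e ihe =>
  intro d
  induction d using Nat.strong_induction_on with
  | _ d ihd =>
  intro S l t f hS hl hgen hf0 hfd hf
  have hne : ∀ i ∈ S, l i ≠ 0 := fun i hi h0 => by
    refine hgen ∅ (by simp) (by simp) i hi (by simp) ?_
    rw [h0]; exact zero_mem _
  by_cases hdiv : ∃ i ∈ S, l i ∣ f
  · obtain ⟨i, hi, g, rfl⟩ := hdiv
    have hg0 : g ≠ 0 := right_ne_zero_of_mul hf0
    rw [totalDegree_mul_of_isDomain (hne i hi) hg0, (hl i).totalDegree (hne i hi)] at hfd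
    obtain ⟨d, rfl⟩ : ∃ d', d = d' + 1 := ⟨d - 1, by omega⟩
    have key := ihd d (by omega) S l (fun T => t T - if i ∈ T then 1 else 0) g hS hl hgen hg0
      (by omega) (by
        intro T hT
        have hT' := Finset.mem_powersetCard.mp hT
        have hA : ∀ a ∈ l '' (T : Set ι), a.IsHomogeneous 1 := by
          rintro _ ⟨j, _, rfl⟩; exact hl j
        by_cases hiT : i ∈ T
        · simp only [hiT, if_true]
          exact div_mem_form _ hA (l i) g ⟨i, hiT, rfl⟩ (hne i hi) _ (hf T hT)
        · simp only [hiT, if_false, Nat.sub_zero]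
          exact div_notMem _ hA (l i) g (hl i) (hgen T hT'.1 hT'.2.le i hi hiT) _ (hf T hT))
    have hcard : ∑ T ∈ S.powersetCard (e + 1), (if i ∈ T then 1 else 0) = (S.card - 1).choose e := by
      rw [← Finset.sum_filter, sum_contain S i hi e (fun _ => 1)]
      simp [Finset.card_erase_of_mem hi]
    calc ∑ T ∈ S.powersetCard (e + 1), t T
        ≤ ∑ T ∈ S.powersetCard (e + 1), ((t T - if i ∈ T then 1 else 0) + if i ∈ T then 1 else 0) :=
          Finset.sum_le_sum fun T _ => by omega
      _ ≤ _ := by rw [Finset.sum_add_distrib, hcard, mul_add, mul_one]; exact Nat.add_le_add_right key _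
  push Not at hdiv
  rcases e with _ | e
  · refine (Finset.sum_eq_zero fun T hT => ?_).trans_le (Nat.zero_le _)
    have hfT := hf T hT
    rw [Finset.mem_powersetCard] at hT
    obtain ⟨i, rfl⟩ := Finset.card_eq_one.mp hT.2
    by_contra h0
    refine hdiv i (hT.1 (by simp)) ?_
    have := Ideal.pow_le_self h0 hfT
    simpa [Ideal.mem_span_singleton] using this
  have key : ∀ i ∈ S, ∑ T ∈ (S.erase i).powersetCard (e + 1), t (insert i T) ≤
      (S.card - 2).choose e * d := by
    intro i hi
    obtain ⟨ψ, hψl, hψd, hψlin, hψhom, hψdeg⟩ := exists_psi (l i) (hl i) (hne i hi)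
    have := ihe e (by omega) d (S.erase i) (fun j => ψ (l j)) (fun T => t (insert i T)) (ψ f)
      (by rw [Finset.card_erase_of_mem hi]; omega) (fun j => hψhom _ (hl j)) ?_ ?_
      ((hψdeg f).trans hfd) ?_
    · rwa [Finset.card_erase_of_mem hi, Nat.sub_sub] at this
    · intro T hT hTc j hj hjT hmem
      have hiT : i ∉ T := fun h => by simpa using hT h
      have hj' := Finset.mem_erase.mp hj
      refine hgen (insert i T) (Finset.insert_subset hi (hT.trans (Finset.erase_subset _ _)))
        (by rw [Finset.card_insert_of_notMem hiT]; omega) j hj'.2 (by simp [hj'.1, hjT]) ?_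
      have himg : (fun j => ψ (l j)) '' (T : Set ι) = ψ.toLinearMap '' (l '' (T : Set ι)) := by
        rw [Set.image_image]; rfl
      rw [himg, ← Submodule.map_span] at hmem
      obtain ⟨w, hw, hwe⟩ := hmem
      have hwh : w.IsHomogeneous 1 := by
        have : Submodule.span kk (l '' (T : Set ι)) ≤ homogeneousSubmodule σ kk 1 := by
          rw [Submodule.span_le]; rintro _ ⟨j, _, rfl⟩; exact hl j
        exact this hw
      obtain ⟨a, ha⟩ := hψlin w hwh
      obtain ⟨b, hb⟩ := hψlin (l j) (hl j)
      have hwe' : ψ w = ψ (l j) := hwe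
      rw [ha, hb] at hwe'
      have h3 : l j = w + (b - a) • l i := by
        rw [sub_smul]; linear_combination -hwe'
      rw [h3]
      refine add_mem (Submodule.span_mono (Set.image_mono (by simp)) hw) (Submodule.smul_mem _ _ (Submodule.subset_span ⟨i, by simp, rfl⟩))
    · intro h0
      have := hψd f
      rw [h0, sub_zero] at this
      exact hdiv i hi this
    · intro T hT
      rw [Finset.mem_powersetCard] at hT
      have hiT : i ∉ T := fun h => by simpa using hT.1 h
      have h1 := hf (insert i T) (by
        rw [Finset.mem_powersetCard, Finset.card_insert_of_notMem hiT, hT.2]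
        exact ⟨Finset.insert_subset hi (hT.1.trans (Finset.erase_subset _ _)), rfl⟩)
      have h2 := Ideal.mem_map_of_mem ψ h1
      rw [Ideal.map_pow, Ideal.map_span] at h2
      refine Ideal.pow_right_mono ?_ _ h2
      rw [Ideal.span_le]
      rintro _ ⟨_, ⟨j, hj, rfl⟩, rfl⟩
      rw [Finset.mem_coe, Finset.mem_insert] at hj
      rcases hj with rfl | hj
      · rw [hψl]; exact zero_mem _
      · exact Ideal.subset_span ⟨j, hj, rfl⟩
  have h1 := double_count S (e + 1) t
  have h2 := Finset.sum_le_sum key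
  rw [← h1, Finset.sum_const, smul_eq_mul] at h2
  obtain ⟨r, hr⟩ : ∃ r, S.card = r + 2 := ⟨S.card - 2, by omega⟩
  rw [hr] at h2 hS ⊢
  have h3 := Nat.add_one_mul_choose_eq r e
  simp only [Nat.add_sub_cancel, show r + 2 - 1 = r + 1 by omega] at h2 ⊢
  generalize ∑ T ∈ S.powersetCard (e + 1 + 1), t T = Z at *
  generalize (r + 1).choose (e + 1) = B at *
  generalize r.choose e = D at *
  have h4 : (r + 1) * ((e + 2) * Z) ≤ (r + 1) * ((e + 2) * (B * d)) := by
    calc (r + 1) * ((e + 2) * Z) ≤ (r + 1) * ((r + 2) * (D * d)) := Nat.mul_le_mul_left _ h2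
      _ = (r + 2) * d * ((r + 1) * D) := by ring
      _ = (B * d) * ((r + 2) * (e + 1)) := by rw [h3]; ring
      _ ≤ (B * d) * ((r + 1) * (e + 2)) := Nat.mul_le_mul_left _ (by nlinarith)
      _ = _ := by ring
  exact Nat.le_of_mul_le_mul_left (Nat.le_of_mul_le_mul_left h4 (by omega)) (by omega)

theorem prod_mem_pow {kk : Type*} [Field kk] {σ : Type*} {s : ℕ} (l : Fin s → MvPolynomial σ kk)
    (T : Finset (Fin s)) (n : ℕ) :
    (∏ i, l i) ^ n ∈ Ideal.span (l '' (T : Set (Fin s))) ^ (T.card * n) := by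
  rw [pow_mul]
  refine Ideal.pow_mem_pow ?_ n
  rw [← Finset.prod_mul_prod_compl T l]
  refine Ideal.mul_mem_right _ _ ?_
  rw [← Finset.prod_const]
  exact Ideal.prod_mem_prod fun i hi => Ideal.subset_span ⟨i, hi, rfl⟩

/-- Let `W_m = W' + m S_N(e,s)` be a fat flat subscheme of `ℙ^N` as in the
construction: `I` is the star configuration ideal built from `s` linear forms in general
position with `1 ≤ e ≤ min(N,s)`; the extra components `M_j` (for `j : Fin t`, here flattened
over all codimensions) are linear subspaces of codimension `c j` with `2 ≤ c j ≤ N`, cut out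
by linearly independent linear forms `v j`, each `M_j` contained in one of the hyperplanes
`H_i = {ℓ i = 0}` (i.e. `ℓ i ∈ span (range (v j))`), none of the subspaces `M_j` and the
star-configuration components contains another, and the multiplicities satisfy
`0 ≤ μ j ≤ ⌊m / e⌋`.  The `k`-th symbolic power of `I(W_m)` is
`(⋂_j I(M_j)^{k·μ j}) ∩ I^{(km)}`.  Then the Waldschmidt constant of `I(W_m)` is `m s / e`. -/
theorem waldschmidt_fat_flat_subscheme
    {kk : Type*} [Field kk] [IsAlgClosed kk]
    (N s e : ℕ) (he : 1 ≤ e) (heN : e ≤ N) (hes : e ≤ s)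
    (ℓ : Fin s → MvPolynomial (Fin (N + 1)) kk)
    (hdeg : ∀ i, (ℓ i).IsHomogeneous 1)
    (hgen : ∀ T : Finset (Fin s), T.card ≤ N + 1 →
      LinearIndependent kk (fun i : T => ℓ (i : Fin s)))
    (m : ℕ) (hm : 1 ≤ m)
    -- the additional linear subspaces `M_j`, of codimension `c j`, cut out by the
    -- linearly independent linear forms `v j 0, …, v j (c j - 1)`
    (t : ℕ) (c : Fin t → ℕ) (hc2 : ∀ j, 2 ≤ c j) (hcN : ∀ j, c j ≤ N)
    (v : (j : Fin t) → Fin (c j) → MvPolynomial (Fin (N + 1)) kk)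
    (hv1 : ∀ j i, (v j i).IsHomogeneous 1)
    (hvind : ∀ j, LinearIndependent kk (v j))
    -- each `M_j` is contained in one of the hyperplanes `H_i`
    (hsub : ∀ j, ∃ i : Fin s, ℓ i ∈ Ideal.span (Set.range (v j)))
    -- no one of the subspaces `M_j` contains another
    (hinc : ∀ j j', j ≠ j' →
      ¬ Ideal.span (Set.range (v j)) ≤ Ideal.span (Set.range (v j')))
    -- no containment between any `M_j` and any component of the star configuration
    (hincStar : ∀ j, ∀ T : Finset (Fin s), T.card = e →
      ¬ Ideal.span (Set.range (v j)) ≤ Ideal.span (ℓ '' (T : Set (Fin s))) ∧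
      ¬ Ideal.span (ℓ '' (T : Set (Fin s))) ≤ Ideal.span (Set.range (v j)))
    -- the multiplicities, with `0 ≤ μ j ≤ ⌊m / e⌋`
    (μ : Fin t → ℕ) (hμ : ∀ j, μ j ≤ m / e) :
    ⨅ k : ℕ+, (alpha
        ((⨅ j : Fin t, (Ideal.span (Set.range (v j))) ^ ((k : ℕ) * μ j)) ⊓
          ⨅ (T : Finset (Fin s)) (_ : T.card = e),
            (Ideal.span (ℓ '' (T : Set (Fin s)))) ^ ((k : ℕ) * m)) : ℝ) / ((k : ℕ) : ℝ)
      = ((m : ℝ) * (s : ℝ)) / (e : ℝ) := by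
    classical
  have hspan : ∀ (T : Finset (Fin s)), T.card ≤ N → ∀ i, i ∉ T →
      ℓ i ∉ Submodule.span kk (ℓ '' (T : Set (Fin s))) := by
    intro T hT i hi
    have h := hgen (insert i T) (by rw [Finset.card_insert_of_notMem hi]; omega)
    have h' : LinearIndepOn kk ℓ (insert i (T : Set (Fin s))) := by
      rw [← Finset.coe_insert]; exact h
    exact ((linearIndepOn_insert (by simpa using hi)).mp h').2
  have hne : ∀ i, ℓ i ≠ 0 := fun i h0 => by
    refine hspan ∅ (by simp) i (by simp) ?_
    rw [h0]; exact zero_mem _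
  -- lower bound for forms
  have lower : ∀ (n d : ℕ) (f : MvPolynomial (Fin (N + 1)) kk), f ≠ 0 → f.IsHomogeneous d →
      f ∈ (⨅ (T : Finset (Fin s)) (_ : T.card = e), (Ideal.span (ℓ '' (T : Set (Fin s)))) ^ n) →
      n * s ≤ e * d := by
    intro n d f hf0 hfd hf
    simp only [Ideal.mem_iInf] at hf
    obtain ⟨e, rfl⟩ : ∃ e', e = e' + 1 := ⟨e - 1, by omega⟩
    have := main_bound e d Finset.univ ℓ (fun _ => n) f (by simpa using hes) hdeg
      (fun T _ hT i _ hi => hspan T (by omega) i hi) hf0 hfd.totalDegree_le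
      (fun T hT => hf T (Finset.mem_powersetCard.mp hT).2)
    rw [Finset.sum_const, Finset.card_powersetCard, Finset.card_univ, Fintype.card_fin,
      smul_eq_mul] at this
    obtain ⟨r, rfl⟩ : ∃ r, s = r + 1 := ⟨s - 1, by omega⟩
    rw [Nat.add_sub_cancel] at this
    have h3 := Nat.add_one_mul_choose_eq r e
    have hpos : 0 < r.choose e := Nat.choose_pos (by omega)
    refine Nat.le_of_mul_le_mul_left ?_ hpos
    calc r.choose e * (n * (r + 1)) = n * ((r + 1) * r.choose e) := by ring
      _ = (e + 1) * ((r + 1).choose (e + 1) * n) := by rw [h3]; ring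
      _ ≤ (e + 1) * (r.choose e * d) := Nat.mul_le_mul_left _ this
      _ = _ := by ring
  -- the product of the linear forms
  have upper : ∀ (k n : ℕ), k * m ≤ e * n → (∀ j, k * μ j ≤ n) →
      (s * n) ∈ {d : ℕ | ∃ f ∈ ((⨅ j : Fin t, (Ideal.span (Set.range (v j))) ^ (k * μ j)) ⊓
          ⨅ (T : Finset (Fin s)) (_ : T.card = e),
            (Ideal.span (ℓ '' (T : Set (Fin s)))) ^ (k * m)),
        f ≠ 0 ∧ MvPolynomial.IsHomogeneous f d} := by
    intro k n h1 h2
    refine ⟨(∏ i, ℓ i) ^ n, ⟨?_, ?_⟩, ?_, ?_⟩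
    · simp only [SetLike.mem_coe, Ideal.mem_iInf]
      intro j
      obtain ⟨i, hi⟩ := hsub j
      refine Ideal.pow_le_pow_right (h2 j) (Ideal.pow_mem_pow ?_ n)
      exact Ideal.mem_of_dvd _ (Finset.dvd_prod_of_mem ℓ (Finset.mem_univ i)) hi
    · simp only [SetLike.mem_coe, Ideal.mem_iInf]
      intro T hT
      refine Ideal.pow_le_pow_right ?_ (prod_mem_pow ℓ T n)
      rw [hT]; exact h1
    · exact pow_ne_zero _ (Finset.prod_ne_zero_iff.mpr fun i _ => hne i)
    · have := (IsHomogeneous.prod Finset.univ ℓ (fun _ => 1) (fun i _ => hdeg i)).pow n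
      simpa using this
  have he0 : (0 : ℝ) < e := by exact_mod_cast he
  have hμm : ∀ j, e * μ j ≤ m := fun j =>
    (Nat.mul_le_mul_left e (hμ j)).trans (Nat.mul_div_le m e)
  apply le_antisymm
  · refine (ciInf_le ⟨0, ?_⟩ (⟨e, he⟩ : ℕ+)).trans ?_
    · rintro _ ⟨k, rfl⟩; positivity
    · simp only [PNat.mk_coe]
      gcongr
      have := Nat.sInf_le (upper e m le_rfl hμm)
      rw [mul_comm (m : ℝ)]
      exact_mod_cast this
  · refine le_ciInf fun k => ?_
    have hk : (0 : ℝ) < (k : ℕ) := by exact_mod_cast k.pos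
    obtain ⟨f, hf, hf0, hfd⟩ := Nat.sInf_mem (⟨_, upper k (k * m) (Nat.le_mul_of_pos_left _ he)
      (fun j => Nat.mul_le_mul_left _ ((hμ j).trans (Nat.div_le_self _ _)))⟩ : Set.Nonempty _)
    have := lower _ _ f hf0 hfd hf.2
    rw [div_le_div_iff₀ he0 hk]
    have h2 : (((k : ℕ) * m * s : ℕ) : ℝ) ≤ ((e * _ : ℕ) : ℝ) := Nat.cast_le.mpr this
    push_cast at h2
    unfold alpha
    linarith
end
end

section
/- Let I be the defining ideal of a star configuration S_N(e,s) in P^N built from s hyperplanes with defining linear forms in general position, where 1 ≤ e ≤ min(N,s). Then the Waldschmidt constant of I equals s/e, i.e. inf_{k≥1} α(I^{(k)})/k = s/e. -/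
noncomputable section

open MvPolynomial

section aux
variable {kk : Type*} [Field kk] {σ : Type*} {ι : Type*}

/-- Partial substitution attached to a linear projection. -/
def starPhi (p : MvPolynomial σ kk →ₗ[kk] MvPolynomial σ kk) :
    MvPolynomial σ kk →ₐ[kk] Polynomial (MvPolynomial σ kk) :=
  MvPolynomial.aeval (fun j => Polynomial.C (X j - p (X j)) + Polynomial.X * Polynomial.C (p (X j)))

/-- Restriction to the subspace. -/
def starRho (p : MvPolynomial σ kk →ₗ[kk] MvPolynomial σ kk) :
    MvPolynomial σ kk →ₐ[kk] MvPolynomial σ kk :=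
  MvPolynomial.aeval (fun j => X j - p (X j))

lemma starRho_lin (p : MvPolynomial σ kk →ₗ[kk] MvPolynomial σ kk) (f : MvPolynomial σ kk)
    (hf : f.IsHomogeneous 1) : starRho p f = f - p f := by
  rw [← mem_homogeneousSubmodule, homogeneousSubmodule_one_eq_span_X] at hf
  induction hf using Submodule.span_induction with
  | mem x h => obtain ⟨j, rfl⟩ := h; simp [starRho]
  | zero => simp
  | add x y _ _ hx hy => rw [map_add, map_add, hx, hy]; ring
  | smul a x _ hx => rw [map_smul, map_smul, hx, smul_sub]

lemma starPhi_lin (p : MvPolynomial σ kk →ₗ[kk] MvPolynomial σ kk) (f : MvPolynomial σ kk)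
    (hf : f.IsHomogeneous 1) :
    starPhi p f = Polynomial.C (f - p f) + Polynomial.X * Polynomial.C (p f) := by
  rw [← mem_homogeneousSubmodule, homogeneousSubmodule_one_eq_span_X] at hf
  induction hf using Submodule.span_induction with
  | mem x h => obtain ⟨j, rfl⟩ := h; simp [starPhi]
  | zero => simp
  | add x y _ _ hx hy => rw [map_add, map_add, hx, hy]; simp only [map_add, map_sub]; ring
  | smul a x _ hx =>
    rw [map_smul, map_smul, hx, ← smul_sub, ← Polynomial.smul_C, ← Polynomial.smul_C,
      mul_smul_comm, ← smul_add]

lemma starPhi_eval (p : MvPolynomial σ kk →ₗ[kk] MvPolynomial σ kk) (f : MvPolynomial σ kk) :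
    (starPhi p f).eval 1 = f := by
  have : ((Polynomial.aeval (R := MvPolynomial σ kk) (1 : MvPolynomial σ kk)).restrictScalars kk).comp
      (starPhi p) = AlgHom.id kk _ := by
    ext j; simp [starPhi]
  have h := DFunLike.congr_fun this f
  simpa [Polynomial.aeval_def, Polynomial.eval₂_eq_eval_map] using h

lemma starPhi_coeff (p : MvPolynomial σ kk →ₗ[kk] MvPolynomial σ kk)
    (P : Ideal (MvPolynomial σ kk)) (hp : ∀ x, p x ∈ P) (f : MvPolynomial σ kk) :
    starPhi p f ∈ reesAlgebra P := by
  induction f using MvPolynomial.induction_on with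
  | C a =>
    have : starPhi p (C a) = algebraMap (MvPolynomial σ kk) _ (C a) := by
      simp only [starPhi, aeval_C]
      rfl
    rw [this]; exact Subalgebra.algebraMap_mem _ _
  | add a b ha hb => rw [map_add]; exact add_mem ha hb
  | mul_X a j ha =>
    rw [map_mul]
    refine mul_mem ha ?_
    simp only [starPhi, aeval_X]
    refine add_mem (Subalgebra.algebraMap_mem _ _) ?_
    rw [Polynomial.X_mul_C, Polynomial.C_mul_X_eq_monomial, reesAlgebra.monomial_mem, pow_one]
    exact hp _

lemma mem_of_X_pow_dvd (p : MvPolynomial σ kk →ₗ[kk] MvPolynomial σ kk)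
    (P : Ideal (MvPolynomial σ kk)) (hp : ∀ x, p x ∈ P) (f : MvPolynomial σ kk) (m : ℕ)
    (h : Polynomial.X ^ m ∣ starPhi p f) : f ∈ P ^ m := by
  rw [← starPhi_eval p f, Polynomial.eval_eq_sum]
  refine Ideal.sum_mem _ fun i _ => ?_
  rw [Polynomial.X_pow_dvd_iff] at h
  simp only [one_pow, mul_one]
  by_cases hi : i < m
  · rw [h i hi]; exact zero_mem _
  · exact Ideal.pow_le_pow_right (not_lt.mp hi) (starPhi_coeff p P hp f i)

lemma X_pow_dvd_of_mem (p : MvPolynomial σ kk →ₗ[kk] MvPolynomial σ kk)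
    (S : Set (MvPolynomial σ kk)) (hS : ∀ x ∈ S, x.IsHomogeneous 1 ∧ p x = x)
    (f : MvPolynomial σ kk) (m : ℕ) (h : f ∈ Ideal.span S ^ m) :
    Polynomial.X ^ m ∣ starPhi p f := by
  have h1 : Ideal.map (starPhi p) (Ideal.span S) ≤ Ideal.span {Polynomial.X} := by
    rw [Ideal.map_span, Ideal.span_le]
    rintro _ ⟨x, hx, rfl⟩
    obtain ⟨h1, h2⟩ := hS x hx
    have := starPhi_lin p x h1
    rw [h2, sub_self, map_zero, zero_add] at this
    rw [SetLike.mem_coe, Ideal.mem_span_singleton]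
    exact ⟨_, this⟩
  have h2 := Ideal.mem_map_of_mem (starPhi p) h
  rw [Ideal.map_pow] at h2
  have h3 := Ideal.pow_right_mono h1 m h2
  rwa [Ideal.span_singleton_pow, Ideal.mem_span_singleton] at h3

lemma exists_proj (L : Submodule kk (MvPolynomial σ kk)) :
    ∃ p : MvPolynomial σ kk →ₗ[kk] MvPolynomial σ kk, (∀ x, p x ∈ L) ∧ ∀ x ∈ L, p x = x := by
  obtain ⟨g, hg⟩ := L.subtype.exists_leftInverse_of_injective L.ker_subtype
  refine ⟨L.subtype.comp g, fun x => (g x).2, fun x hx => ?_⟩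
  have := DFunLike.congr_fun hg ⟨x, hx⟩
  simp at this
  simp [this]

lemma star_span_le (S : Set (MvPolynomial σ kk)) (x : MvPolynomial σ kk)
    (hx : x ∈ Submodule.span kk S) : x ∈ Ideal.span S := by
  exact Submodule.span_le_restrictScalars kk (MvPolynomial σ kk) S hx

lemma div_notMem_s2 (S : Set (MvPolynomial σ kk)) (hS : ∀ x ∈ S, x.IsHomogeneous 1)
    (l g : MvPolynomial σ kk) (hl : l.IsHomogeneous 1) (hlS : l ∉ Submodule.span kk S) (m : ℕ)
    (h : l * g ∈ Ideal.span S ^ m) : g ∈ Ideal.span S ^ m := by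
  obtain ⟨p, hp, hp'⟩ := exists_proj (Submodule.span kk S)
  apply mem_of_X_pow_dvd p _ (fun x => star_span_le S _ (hp x))
  have h1 := X_pow_dvd_of_mem p S (fun x hx => ⟨hS x hx, hp' x (Submodule.subset_span hx)⟩) _ m h
  rw [map_mul] at h1
  refine Polynomial.prime_X.pow_dvd_of_dvd_mul_left m ?_ h1
  rw [starPhi_lin p l hl, Polynomial.X_dvd_iff]
  simp only [Polynomial.coeff_add, Polynomial.coeff_C_zero, Polynomial.mul_coeff_zero,
    Polynomial.coeff_X_zero, zero_mul, add_zero]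
  intro h0
  apply hlS
  rw [sub_eq_zero] at h0
  rw [h0]; exact hp l

lemma star_div_mem (S : Set (MvPolynomial σ kk)) (hS : ∀ x ∈ S, x.IsHomogeneous 1)
    (l g : MvPolynomial σ kk) (hlS : l ∈ S) (h0 : l ≠ 0) (m : ℕ)
    (h : l * g ∈ Ideal.span S ^ m) : g ∈ Ideal.span S ^ (m - 1) := by
  obtain ⟨p, hp, hp'⟩ := exists_proj (Submodule.span kk S)
  apply mem_of_X_pow_dvd p _ (fun x => star_span_le S _ (hp x))
  have h1 := X_pow_dvd_of_mem p S (fun x hx => ⟨hS x hx, hp' x (Submodule.subset_span hx)⟩) _ m h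
  rcases m with _ | m
  · simp
  rw [map_mul, starPhi_lin p l (hS l hlS), hp' l (Submodule.subset_span hlS), sub_self, map_zero,
    zero_add, pow_succ', mul_assoc] at h1
  have h2 := (mul_dvd_mul_iff_left Polynomial.X_ne_zero).mp h1
  refine Polynomial.prime_X.pow_dvd_of_dvd_mul_left _ ?_ h2
  rw [Polynomial.X_dvd_iff, Polynomial.coeff_C_zero]
  exact h0

lemma le_totalDegree_of_mem (S : Set (MvPolynomial σ kk)) (hS : ∀ x ∈ S, x.IsHomogeneous 1)
    (f : MvPolynomial σ kk) (h0 : f ≠ 0) (m : ℕ) (h : f ∈ Ideal.span S ^ m) :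
    m ≤ f.totalDegree := by
  have h1 : Ideal.span S ≤ idealOfVars σ kk := by
    rw [Ideal.span_le]
    intro x hx
    have hf := hS x hx
    rw [← mem_homogeneousSubmodule, homogeneousSubmodule_one_eq_span_X] at hf
    exact star_span_le _ _ hf
  have h2 := (mem_pow_idealOfVars_iff m f).mp (Ideal.pow_right_mono h1 m h)
  obtain ⟨d, hd⟩ := MvPolynomial.support_nonempty.mpr h0
  exact (h2 d hd).trans (le_totalDegree hd)

lemma starRho_totalDegree (p : MvPolynomial σ kk →ₗ[kk] MvPolynomial σ kk)
    (hp : ∀ x, (p x).IsHomogeneous 1) (f : MvPolynomial σ kk) :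
    (starRho p f).totalDegree ≤ f.totalDegree := by
  conv_lhs => rw [← sum_homogeneousComponent f, map_sum]
  apply totalDegree_finsetSum_le
  intro i hi
  have h : (starRho p (homogeneousComponent i f)).IsHomogeneous (1 * i) :=
    (homogeneousComponent_isHomogeneous i f).aeval _ (fun j => (isHomogeneous_X _ j).sub (hp _))
  have := h.totalDegree_le
  simp at hi
  omega

lemma starRho_sub (p : MvPolynomial σ kk →ₗ[kk] MvPolynomial σ kk)
    (P : Ideal (MvPolynomial σ kk)) (hp : ∀ x, p x ∈ P) (f : MvPolynomial σ kk) :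
    f - starRho p f ∈ P := by
  induction f using MvPolynomial.induction_on with
  | C a => simp [starRho]
  | add a b ha hb =>
    rw [map_add, add_sub_add_comm]; exact add_mem ha hb
  | mul_X a j ha =>
    have : a * X j - starRho p (a * X j) = (a - starRho p a) * X j + starRho p a * p (X j) := by
      rw [map_mul]; simp only [starRho, aeval_X]; ring
    rw [this]
    exact add_mem (Ideal.mul_mem_right _ _ ha) (Ideal.mul_mem_left _ _ (hp _))

/-- Restriction to a hyperplane. -/
lemma exists_restrict (l : MvPolynomial σ kk) (hl : l.IsHomogeneous 1) :
    ∃ ρ : MvPolynomial σ kk →ₐ[kk] MvPolynomial σ kk, ρ l = 0 ∧ (∀ f, ρ f = 0 → l ∣ f) ∧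
      (∀ f, (ρ f).totalDegree ≤ f.totalDegree) ∧
      (∀ f, f.IsHomogeneous 1 → (ρ f).IsHomogeneous 1) ∧
      (∀ f, f.IsHomogeneous 1 → ρ f = 0 → f ∈ Submodule.span kk {l}) := by
  obtain ⟨p, hp, hp'⟩ := exists_proj (Submodule.span kk {l})
  have hp1 : ∀ x, (p x).IsHomogeneous 1 := by
    intro x
    have : Submodule.span kk {l} ≤ homogeneousSubmodule σ kk 1 := by
      rw [Submodule.span_le]; simpa using hl
    exact this (hp x)
  refine ⟨starRho p, ?_, ?_, starRho_totalDegree p hp1, ?_, ?_⟩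
  · rw [starRho_lin p l hl, hp' l (Submodule.subset_span rfl), sub_self]
  · intro f hf
    have := starRho_sub p (Ideal.span {l}) (fun x => star_span_le _ _ (hp x)) f
    rwa [hf, sub_zero, Ideal.mem_span_singleton] at this
  · intro f hf
    rw [starRho_lin p f hf]; exact hf.sub (hp1 f)
  · intro f hf h
    rw [starRho_lin p f hf, sub_eq_zero] at h
    rw [h]; exact hp f

end aux

section core
variable {kk : Type*} [Field kk] {σ : Type*} {ι : Type*} [DecidableEq ι]

lemma prod_div (ℓ : ι → MvPolynomial σ kk) (hdeg : ∀ i, (ℓ i).IsHomogeneous 1)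
    (T : Finset ι) (V : Finset ι) (h0 : ∀ i ∈ V, ℓ i ≠ 0)
    (hT : ∀ i ∈ V, i ∉ T → ℓ i ∉ Submodule.span kk (ℓ '' (T : Set ι))) :
    ∀ (m : ℕ) (G : MvPolynomial σ kk), (∏ i ∈ V, ℓ i) * G ∈ Ideal.span (ℓ '' (T : Set ι)) ^ m →
      G ∈ Ideal.span (ℓ '' (T : Set ι)) ^ (m - (V ∩ T).card) := by
  have hS : ∀ x ∈ ℓ '' (T : Set ι), x.IsHomogeneous 1 := by
    rintro _ ⟨i, _, rfl⟩; exact hdeg i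
  induction V using Finset.induction_on with
  | empty => intro m G h; simpa using h
  | insert i V hi ih =>
    intro m G h
    rw [Finset.prod_insert hi, mul_assoc] at h
    have ih' := ih (fun j hj => h0 j (Finset.mem_insert_of_mem hj))
      (fun j hj => hT j (Finset.mem_insert_of_mem hj))
    by_cases hiT : i ∈ T
    · have h1 := star_div_mem _ hS (ℓ i) _ ⟨i, hiT, rfl⟩ (h0 i (Finset.mem_insert_self _ _)) m h
      have h2 := ih' _ _ h1
      rw [Finset.insert_inter_of_mem hiT, Finset.card_insert_of_notMem (by simp [hi])]
      rwa [Nat.sub_sub, add_comm] at h2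
    · have h1 := div_notMem_s2 _ hS (ℓ i) _ (hdeg i) (hT i (Finset.mem_insert_self _ _) hiT) m h
      have h2 := ih' _ _ h1
      rwa [Finset.insert_inter_of_notMem hiT]

lemma prod_dvd (ℓ : ι → MvPolynomial σ kk) (hdeg : ∀ i, (ℓ i).IsHomogeneous 1)
    (F : MvPolynomial σ kk) (V : Finset ι)
    (hind : ∀ i ∈ V, ∀ j ∈ V, i ≠ j → ℓ j ∉ Submodule.span kk {ℓ i})
    (hd : ∀ i ∈ V, ℓ i ∣ F) : (∏ i ∈ V, ℓ i) ∣ F := by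
  induction V using Finset.induction_on with
  | empty => simp
  | insert i V hi ih =>
    obtain ⟨G, hG⟩ := ih (fun a ha b hb => hind a (Finset.mem_insert_of_mem ha) b
      (Finset.mem_insert_of_mem hb)) (fun a ha => hd a (Finset.mem_insert_of_mem ha))
    obtain ⟨ρ, h1, h2, -, -, h5⟩ := exists_restrict (ℓ i) (hdeg i)
    obtain ⟨K, hK⟩ := hd i (Finset.mem_insert_self _ _)
    have hF : ρ F = 0 := by rw [hK, map_mul, h1, zero_mul]
    rw [hG, map_mul, map_prod, mul_eq_zero, Finset.prod_eq_zero_iff] at hF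
    rcases hF with ⟨j, hj, hj0⟩ | hF
    · exact absurd (h5 _ (hdeg j) hj0) (hind i (Finset.mem_insert_self _ _) j
        (Finset.mem_insert_of_mem hj) (by rintro rfl; exact hi hj))
    · obtain ⟨K', hK'⟩ := h2 _ hF
      rw [Finset.prod_insert hi]
      exact ⟨K', by rw [hG, hK']; ring⟩

theorem star_core (e : ℕ) : ∀ (d : ℕ) (U : Finset ι) (ℓ : ι → MvPolynomial σ kk)
    (_ : ∀ i, (ℓ i).IsHomogeneous 1)
    (_ : ∀ T ⊆ U, T.card ≤ e + 1 → LinearIndepOn kk ℓ (T : Set ι))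
    (_ : e ≤ U.card) (F : MvPolynomial σ kk) (_ : F ≠ 0) (_ : F.totalDegree ≤ d) (k : ℕ)
    (_ : ∀ T ⊆ U, T.card = e → F ∈ Ideal.span (ℓ '' (T : Set ι)) ^ k),
    U.card * k ≤ d * e := by
  induction e with
  | zero =>
    intro d U ℓ hdeg hgen hU F hF hFd k hk
    have h := hk ∅ (by simp) (by simp)
    rcases k with _ | k
    · simp
    · exfalso
      apply hF
      rw [pow_succ] at h
      simpa using Ideal.mul_le_right h
  | succ e ihe =>
    intro d
    induction d using Nat.strong_induction_on with
    | _ d ihd =>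
    intro U ℓ hdeg hgen hU F hF hFd k hk
    have h0 : ∀ i ∈ U, ℓ i ≠ 0 := by
      intro i hi
      exact (hgen {i} (by simpa using hi) (by simp)).ne_zero (by simp)
    by_cases hex : ∃ i ∈ U, ¬ ℓ i ∣ F
    · obtain ⟨i, hi, hiF⟩ := hex
      obtain ⟨ρ, h1, h2, h3, h4, h5⟩ := exists_restrict (ℓ i) (hdeg i)
      have hkd : k ≤ d := by
        obtain ⟨T, hTU, hT⟩ := Finset.exists_subset_card_eq hU
        refine (le_totalDegree_of_mem _ ?_ F hF k (hk T hTU hT)).trans hFd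
        rintro _ ⟨i, _, rfl⟩; exact hdeg i
      have key := ihe d (U.erase i) (fun j => ρ (ℓ j)) (fun j => h4 _ (hdeg j)) ?_ ?_ (ρ F)
        (fun h => hiF (h2 _ h)) ((h3 F).trans hFd) k ?_
      · rw [Finset.card_erase_of_mem hi] at key
        have hpos : 1 ≤ U.card := Finset.card_pos.mpr ⟨i, hi⟩
        obtain ⟨c, hc⟩ := Nat.exists_eq_add_of_le hpos
        rw [hc] at key ⊢
        rw [Nat.add_sub_cancel_left] at key
        nlinarith
      · intro T hT hTc
        have hiT : i ∉ T := fun h => by simpa using hT h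
        have hins := hgen (insert i T) (by
          intro x hx
          rcases Finset.mem_insert.mp hx with rfl | hx
          · exact hi
          · exact Finset.mem_of_mem_erase (hT hx)) (by
            rw [Finset.card_insert_of_notMem hiT]; omega)
        rw [Finset.coe_insert, linearIndepOn_insert (by simpa using hiT)] at hins
        refine LinearIndepOn.map_injOn (v := ℓ) hins.1 ρ.toLinearMap ?_
        have hsp : Submodule.span kk (ℓ '' (T : Set ι)) ≤ homogeneousSubmodule σ kk 1 := by
          rw [Submodule.span_le]
          rintro _ ⟨j, _, rfl⟩; exact hdeg j
        intro x hx y hy hxy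
        have hxy' : ρ (x - y) = 0 := by
          rw [map_sub, sub_eq_zero]; exact hxy
        have hm := sub_mem hx hy
        have := h5 _ (hsp hm) hxy'
        obtain ⟨a, ha⟩ := Submodule.mem_span_singleton.mp this
        by_cases ha0 : a = 0
        · rw [ha0, zero_smul] at ha
          exact (sub_eq_zero.mp ha.symm)
        · exfalso
          apply hins.2
          rw [← ha] at hm
          exact (Submodule.smul_mem_iff _ ha0).mp hm
      · rw [Finset.card_erase_of_mem hi]; omega
      · intro T hT hTc
        have hiT : i ∉ T := fun h => by simpa using hT h
        have hm := hk (insert i T) (by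
          intro x hx
          rcases Finset.mem_insert.mp hx with rfl | hx
          · exact hi
          · exact Finset.mem_of_mem_erase (hT hx)) (by
            rw [Finset.card_insert_of_notMem hiT]; omega)
        have hm' := Ideal.mem_map_of_mem ρ hm
        rw [Ideal.map_pow] at hm'
        refine Ideal.pow_right_mono ?_ k hm'
        rw [Ideal.map_span, Ideal.span_le]
        rintro _ ⟨_, ⟨j, hj, rfl⟩, rfl⟩
        rcases Finset.mem_insert.mp hj with rfl | hj
        · rw [h1]; exact zero_mem _
        · exact Ideal.subset_span ⟨j, hj, rfl⟩
    · push Not at hex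
      have hdvd := prod_dvd ℓ hdeg F U (by
        intro i hi j hj hij
        have h := hgen {j, i} (by
          intro x hx
          simp only [Finset.mem_insert, Finset.mem_singleton] at hx
          rcases hx with rfl | rfl <;> assumption) (Finset.card_le_two.trans (by omega))
        rw [Finset.coe_insert, Finset.coe_singleton, linearIndepOn_insert (by simpa using hij.symm)]
          at h
        simpa using h.2) hex
      obtain ⟨G, rfl⟩ := hdvd
      have hG : G ≠ 0 := right_ne_zero_of_mul hF
      have hP : (∏ i ∈ U, ℓ i) ≠ 0 := left_ne_zero_of_mul hF
      have hPd : (∏ i ∈ U, ℓ i).totalDegree = U.card := by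
        have := (IsHomogeneous.prod U ℓ (fun _ => 1) (fun i _ => hdeg i)).totalDegree hP
        simpa using this
      rw [totalDegree_mul_of_isDomain hP hG, hPd] at hFd
      have key := ihd (d - U.card) (by omega) U ℓ hdeg hgen hU G hG (by omega) (k - (e + 1)) (by
        intro T hTU hTc
        have := prod_div ℓ hdeg T U h0 (by
          intro i hi hiT
          have h := hgen (insert i T) (Finset.insert_subset hi hTU) (by
            rw [Finset.card_insert_of_notMem hiT]; omega)
          rw [Finset.coe_insert, linearIndepOn_insert (by simpa using hiT)] at h
          exact h.2) k G (hk T hTU hTc)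
        rwa [Finset.inter_eq_right.mpr hTU, hTc] at this)
      obtain ⟨d', rfl⟩ := Nat.exists_eq_add_of_le (show U.card ≤ d by omega)
      rw [Nat.add_sub_cancel_left] at key
      have hk' : k ≤ (k - (e + 1)) + (e + 1) := by omega
      have := Nat.mul_le_mul_left U.card hk'
      nlinarith

end core

/-- Let `I` be the defining ideal of the star configuration `S_N(e,s)`
in `ℙ^N`, built from `s` hyperplanes whose defining linear forms are in general position
(any at most `N+1` of them are linearly independent), where `1 ≤ e ≤ min(N,s)`.  Its
`t`-th symbolic power is `I^{(t)} = ⋂_{|T| = e} (span (ℓ '' T))^t`.  Then the Waldschmidt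
constant of `I`, namely `inf_{k ≥ 1} α(I^{(k)})/k`, equals `s/e`. -/
theorem waldschmidt_star_configuration
    {kk : Type*} [Field kk] [IsAlgClosed kk]
    (N s e : ℕ) (he : 1 ≤ e) (heN : e ≤ N) (hes : e ≤ s)
    (ℓ : Fin s → MvPolynomial (Fin (N + 1)) kk)
    (hdeg : ∀ i, (ℓ i).IsHomogeneous 1)
    (hgen : ∀ T : Finset (Fin s), T.card ≤ N + 1 →
      LinearIndependent kk (fun i : T => ℓ (i : Fin s))) :
    ⨅ k : ℕ+, (alpha (⨅ (T : Finset (Fin s)) (_ : T.card = e),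
        (Ideal.span (ℓ '' (T : Set (Fin s)))) ^ (k : ℕ)) : ℝ) / ((k : ℕ) : ℝ)
      = (s : ℝ) / (e : ℝ) := by
  
  classical
  have hne : ∀ i, ℓ i ≠ 0 := fun i => by
    have : LinearIndepOn kk ℓ (({i} : Finset (Fin s)) : Set (Fin s)) := hgen {i} (by simp)
    exact this.ne_zero (by simp)
  have hprod0 : (∏ i, ℓ i) ≠ 0 := Finset.prod_ne_zero_iff.mpr fun i _ => hne i
  have hprodh : (∏ i, ℓ i).IsHomogeneous s := by
    simpa using IsHomogeneous.prod Finset.univ ℓ (fun _ => 1) (fun i _ => hdeg i)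
  have hprodm : ∀ T : Finset (Fin s), T.card = e →
      (∏ i, ℓ i) ∈ Ideal.span (ℓ '' (T : Set (Fin s))) ^ e := by
    intro T hT
    rw [← Finset.prod_sdiff (Finset.subset_univ T)]
    apply Ideal.mul_mem_left
    rw [← hT, ← Finset.prod_const]
    exact Ideal.prod_mem_prod fun i hi => Ideal.subset_span ⟨i, hi, rfl⟩
  have he0 : (0 : ℝ) < e := by exact_mod_cast he
  apply le_antisymm
  · refine (ciInf_le ⟨0, ?_⟩ (⟨e, he⟩ : ℕ+)).trans ?_
    · rintro _ ⟨k, rfl⟩; positivity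
    · simp only [PNat.mk_coe]
      gcongr
      apply Nat.sInf_le
      refine ⟨∏ i, ℓ i, ?_, hprod0, hprodh⟩
      simp only [Ideal.mem_iInf]
      exact hprodm
  · refine le_ciInf fun k => ?_
    have hk0 : (0 : ℝ) < ((k : ℕ) : ℝ) := by exact_mod_cast k.pos
    rw [div_le_div_iff₀ he0 hk0]
    have hmem := Nat.sInf_mem (s := {d : ℕ | ∃ f ∈ (⨅ (T : Finset (Fin s)) (_ : T.card = e),
        (Ideal.span (ℓ '' (T : Set (Fin s)))) ^ (k : ℕ)), f ≠ 0 ∧ MvPolynomial.IsHomogeneous f d})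
      ⟨s * k, (∏ i, ℓ i) ^ (k : ℕ), by
        simp only [Ideal.mem_iInf]
        intro T hT
        exact Ideal.pow_mem_pow (Ideal.pow_le_self (by omega) (hprodm T hT)) _,
        pow_ne_zero _ hprod0, hprodh.pow _⟩
    obtain ⟨f, hf, hf0, hfh⟩ := hmem
    simp only [Ideal.mem_iInf] at hf
    have := star_core e _ Finset.univ ℓ hdeg
      (fun T _ hT => hgen T (by omega)) (by simpa using hes) f hf0 hfh.totalDegree_le k
      (fun T _ hT => hf T hT)
    rw [Finset.card_univ, Fintype.card_fin] at this
    exact_mod_cast this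
end
end

section
/- Let L be a line in P^2, let p_2, p_3, p_4 be three distinct points of L, and let p_1 be a point not on L. Let Z = 2p_1 + p_2 + p_3 + p_4 be the fat points scheme with a double point at p_1 and simple points at p_2, p_3, p_4. Then the Waldschmidt constant of I(Z) equals 7/3. -/
noncomputable section

open MvPolynomial

/-- The homogeneous (prime) ideal of the point of `ℙ²` represented by the nonzero vector
`p`, generated by the linear forms vanishing at `p`. -/
def pointIdeal {kk : Type*} [Field kk] (p : Fin 3 → kk) : Ideal (MvPolynomial (Fin 3) kk) :=
  Ideal.span {f | f.IsHomogeneous 1 ∧ MvPolynomial.eval p f = 0}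

/-- Two nonzero vectors represent the same point of `ℙ²`. -/
def projEq {kk : Type*} [Field kk] (p q : Fin 3 → kk) : Prop :=
  ∃ c : kk, c ≠ 0 ∧ q = c • p


section Aux
variable {kk : Type*} [Field kk]

lemma aux_lin (f : MvPolynomial (Fin 3) kk) (hf : f.IsHomogeneous 1) :
    ∃ c : Fin 3 → kk, f = ∑ i, C (c i) * X i := by
  have h : f ∈ homogeneousSubmodule (Fin 3) kk 1 := hf
  rw [homogeneousSubmodule_one_eq_span_X, Submodule.mem_span_range_iff_exists_fun] at h
  obtain ⟨c, hc⟩ := h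
  exact ⟨c, by simp [← hc, smul_eq_C_mul]⟩

lemma aux_eval_add (f : MvPolynomial (Fin 3) kk) (hf : f.IsHomogeneous 1) (a b c : kk)
    (p q r : Fin 3 → kk) :
    eval (a • p + b • q + c • r) f = a * eval p f + b * eval q f + c * eval r f := by
  obtain ⟨c, rfl⟩ := aux_lin f hf
  simp [Fin.sum_univ_three]
  ring

/-- the linear change of coordinates -/
def chg (p q r : Fin 3 → kk) : MvPolynomial (Fin 3) kk →ₐ[kk] MvPolynomial (Fin 3) kk :=
  aeval (fun i => C (p i) * X 0 + C (q i) * X 1 + C (r i) * X 2)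

lemma chg_lin (p q r : Fin 3 → kk) (f : MvPolynomial (Fin 3) kk) (hf : f.IsHomogeneous 1) :
    chg p q r f = C (eval p f) * X 0 + C (eval q f) * X 1 + C (eval r f) * X 2 := by
  obtain ⟨c, rfl⟩ := aux_lin f hf
  simp [Fin.sum_univ_three, chg, algebraMap_eq]
  ring

lemma chg_hom (p q r : Fin 3 → kk) (f : MvPolynomial (Fin 3) kk) (d : ℕ)
    (hf : f.IsHomogeneous d) : (chg p q r f).IsHomogeneous d := by
  have := hf.aeval (fun i => C (p i) * X 0 + C (q i) * X 1 + C (r i) * X (2 : Fin 3))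
    (n := 1) (fun i => by
      have h : ∀ (a : kk) (j : Fin 3), (C a * X j : MvPolynomial (Fin 3) kk).IsHomogeneous 1 := by
        intro a j
        simpa using (isHomogeneous_C (Fin 3) a).mul (isHomogeneous_X kk j)
      exact ((h _ _).add (h _ _)).add (h _ _))
  simpa [chg] using this

lemma chg_ne (p q r : Fin 3 → kk) [Infinite kk]
    (hs : ∀ v : Fin 3 → kk, ∃ a b c : kk, v = a • p + b • q + c • r)
    (f : MvPolynomial (Fin 3) kk) (hf : f ≠ 0) : chg p q r f ≠ 0 := by
  intro h
  apply hf
  apply MvPolynomial.funext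
  intro v
  obtain ⟨a, b, c, rfl⟩ := hs v
  have h2 : (eval ![a, b, c]) (chg p q r f) = eval (a • p + b • q + c • r) f := by
    have : ((aeval ![a, b, c] : MvPolynomial (Fin 3) kk →ₐ[kk] kk).comp (chg p q r)) =
        aeval (a • p + b • q + c • r) := by
      apply MvPolynomial.algHom_ext
      intro i
      simp [chg]
      ring
    have := congrArg (fun g => g f) this
    simpa [aeval_eq_eval] using this
  rw [← h2, h]; simp

/-- coordinate change to polynomials in one variable over two-variable polynomials -/
def psi (p q r : Fin 3 → kk) :
    MvPolynomial (Fin 3) kk →ₐ[kk] Polynomial (MvPolynomial (Fin 2) kk) :=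
  (finSuccEquiv kk 2).toAlgHom.comp (chg p q r)

lemma psi_lin (p q r : Fin 3 → kk) (f : MvPolynomial (Fin 3) kk) (hf : f.IsHomogeneous 1) :
    psi p q r f = Polynomial.C (C (eval p f)) * Polynomial.X
      + Polynomial.C (C (eval q f) * X 0) + Polynomial.C (C (eval r f) * X 1) := by
  have h1 : finSuccEquiv kk 2 (X 1) = Polynomial.C (X 0) := finSuccEquiv_X_succ (j := 0)
  have h2 : finSuccEquiv kk 2 (X 2) = Polynomial.C (X 1) := finSuccEquiv_X_succ (j := 1)
  have h3 : ∀ a : kk, finSuccEquiv kk 2 (C a) = Polynomial.C (C a) := fun a => by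
    simp [finSuccEquiv_apply]
  simp [psi, chg_lin p q r f hf, h1, h2, h3, finSuccEquiv_X_zero]

lemma mem_pow_of (p q r s : Fin 3 → kk) (J : Ideal (Polynomial (MvPolynomial (Fin 2) kk)))
    (h : ∀ f : MvPolynomial (Fin 3) kk, f.IsHomogeneous 1 → eval s f = 0 → psi p q r f ∈ J)
    (n : ℕ) (f : MvPolynomial (Fin 3) kk) (hf : f ∈ pointIdeal s ^ n) : psi p q r f ∈ J ^ n := by
  have h1 : Ideal.map (psi p q r) (pointIdeal s) ≤ J := by
    rw [pointIdeal, Ideal.map_span, Ideal.span_le]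
    rintro _ ⟨g, ⟨hg1, hg2⟩, rfl⟩
    exact h g hg1 hg2
  have h2 := Ideal.mem_map_of_mem (psi p q r) hf
  rw [Ideal.map_pow] at h2
  exact Ideal.pow_right_mono h1 n h2

lemma coeff_dvd {A : Type*} [CommRing A] (l : A) (n : ℕ) :
    ∀ g ∈ (Ideal.span {Polynomial.X, Polynomial.C l} : Ideal (Polynomial A)) ^ n,
      ∀ j, l ^ (n - j) ∣ g.coeff j := by
  induction n with
  | zero => intro g _ j; simp
  | succ n ih =>
    intro g hg
    rw [pow_succ] at hg
    refine Submodule.mul_induction_on hg ?_ ?_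
    · intro a ha b hb j
      obtain ⟨u, v, rfl⟩ := Ideal.mem_span_pair.mp hb
      have e : a * (u * Polynomial.X + v * Polynomial.C l) =
        (a * u) * Polynomial.X + (a * v) * Polynomial.C l := by ring
      rw [e, Polynomial.coeff_add, Polynomial.coeff_mul_C]
      apply dvd_add
      · cases j with
        | zero => simp
        | succ j =>
          rw [Polynomial.coeff_mul_X]
          have := ih _ (Ideal.mul_mem_right u _ ha) j
          simpa using this
      · have := ih _ (Ideal.mul_mem_right v _ ha) j
        refine dvd_trans ?_ (mul_dvd_mul_right this l)
        rw [← pow_succ]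
        exact pow_dvd_pow _ (by omega)
    · intro a b ha hb j
      rw [Polynomial.coeff_add]
      exact dvd_add (ha j) (hb j)

lemma relprime01 : IsRelPrime (X 0 : MvPolynomial (Fin 2) kk) (X 1) := by
  rw [(X_prime (i := (0 : Fin 2)) (R := kk)).irreducible.isRelPrime_iff_not_dvd, X_dvd_X]
  simp

lemma deg_bound (a b : kk) (ha : a ≠ 0) (hb : b ≠ 0) (m D : ℕ) (g : MvPolynomial (Fin 2) kk)
    (hg0 : g ≠ 0) (hg : g.IsHomogeneous D)
    (h1 : (X 0) ^ m ∣ g) (h2 : (X 1) ^ m ∣ g) (h3 : (C b * X 0 - C a * X 1) ^ m ∣ g) :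
    3 * m ≤ D := by
  have r01 := relprime01 (kk := kk)
  have hua : IsUnit (C a : MvPolynomial (Fin 2) kk) := (isUnit_iff_ne_zero.mpr ha).map C
  have hub : IsUnit (C b : MvPolynomial (Fin 2) kk) := (isUnit_iff_ne_zero.mpr hb).map C
  have r0 : IsRelPrime (X 0) (C b * X 0 - C a * X 1 : MvPolynomial (Fin 2) kk) := by
    intro d hd1 hd2
    refine r01 hd1 ?_
    have : d ∣ C a * X 1 := by
      have := dvd_sub (hd1.mul_left (C b)) hd2
      simpa using this
    exact hua.dvd_mul_left.mp this
  have r1 : IsRelPrime (X 1) (C b * X 0 - C a * X 1 : MvPolynomial (Fin 2) kk) := by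
    intro d hd1 hd2
    refine r01 ?_ hd1
    have : d ∣ C b * X 0 := by
      have := dvd_add (hd1.mul_left (C a)) hd2
      simpa using this
    exact hub.dvd_mul_left.mp this
  have hd : (X 0) ^ m * (X 1) ^ m * (C b * X 0 - C a * X 1) ^ m ∣ g :=
    (r0.pow.mul_left r1.pow).mul_dvd (r01.pow.mul_dvd h1 h2) h3
  have hl : (C b * X 0 - C a * X 1 : MvPolynomial (Fin 2) kk).IsHomogeneous 1 := by
    have h : ∀ (a : kk) (j : Fin 2), (C a * X j : MvPolynomial (Fin 2) kk).IsHomogeneous 1 := by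
      intro a j
      simpa using (isHomogeneous_C (Fin 2) a).mul (isHomogeneous_X kk j)
    exact (h _ _).sub (h _ _)
  have hh := (((isHomogeneous_X kk (0 : Fin 2)).pow m).mul
    ((isHomogeneous_X kk (1 : Fin 2)).pow m)).mul (hl.pow m)
  obtain ⟨w, rfl⟩ := hd
  have hw := left_ne_zero_of_mul hg0
  have hw' := right_ne_zero_of_mul hg0
  have := hg.totalDegree hg0
  rw [totalDegree_mul_of_isDomain hw hw', hh.totalDegree hw] at this
  omega

lemma deg_bound2 (n D : ℕ) (g : MvPolynomial (Fin 2) kk) (hg0 : g ≠ 0) (hg : g.IsHomogeneous D)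
    (h : g ∈ (Ideal.span {X 0, X 1} : Ideal (MvPolynomial (Fin 2) kk)) ^ n) : n ≤ D := by
  have e : (Ideal.span {X 0, X 1} : Ideal (MvPolynomial (Fin 2) kk)) = idealOfVars (Fin 2) kk := by
    rw [idealOfVars]
    congr 1
    ext; simp [Fin.exists_fin_two, eq_comm]
  rw [e, mem_pow_idealOfVars_iff] at h
  obtain ⟨x, hx⟩ := ne_zero_iff.mp hg0
  have h1 := h x (mem_support_iff.mpr hx)
  have h2 := hg hx
  have h3 : x.degree = D := by rw [Finsupp.degree_eq_weight_one]; exact h2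
  omega

lemma lower (p₁ p₂ p₃ p₄ : Fin 3 → kk) [Infinite kk]
    (hs : ∀ v : Fin 3 → kk, ∃ a b c : kk, v = a • p₁ + b • p₂ + c • p₃)
    (a b : kk) (ha : a ≠ 0) (hb : b ≠ 0) (h4 : p₄ = a • p₂ + b • p₃) (k d : ℕ)
    (f : MvPolynomial (Fin 3) kk) (hf0 : f ≠ 0) (hf : f.IsHomogeneous d)
    (m1 : f ∈ pointIdeal p₁ ^ (2 * k)) (m2 : f ∈ pointIdeal p₂ ^ k)
    (m3 : f ∈ pointIdeal p₃ ^ k) (m4 : f ∈ pointIdeal p₄ ^ k) : 7 * k ≤ 3 * d := by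
  set g := psi p₁ p₂ p₃ f with hg
  have hc0 := chg_ne p₁ p₂ p₃ hs f hf0
  have hch := chg_hom p₁ p₂ p₃ f d hf
  have hg0 : g ≠ 0 := by
    simpa [hg, psi] using hc0
  have hj : g.natDegree ≤ d := by
    have := natDegree_finSuccEquiv (chg p₁ p₂ p₃ f)
    have h2 := degreeOf_le_totalDegree (chg p₁ p₂ p₃ f) 0
    rw [hch.totalDegree hc0, ← this] at h2
    exact h2
  have hl0 : g.coeff g.natDegree ≠ 0 := by simpa using hg0
  have hlh : (g.coeff g.natDegree).IsHomogeneous (d - g.natDegree) :=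
    hch.finSuccEquiv_coeff_isHomogeneous _ _ (by omega)
  have n1 : g ∈ (Ideal.map Polynomial.C (Ideal.span {X 0, X 1})) ^ (2 * k) := by
    refine mem_pow_of p₁ p₂ p₃ p₁ _ ?_ _ _ m1
    intro f hf h
    rw [psi_lin _ _ _ f hf, h]
    simp only [map_zero, zero_mul, zero_add]
    rw [← map_add]
    apply Ideal.mem_map_of_mem
    exact Ideal.mem_span_pair.mpr ⟨_, _, rfl⟩
  rw [← Ideal.map_pow, Ideal.mem_map_C_iff] at n1
  have b1 := deg_bound2 _ _ _ hl0 hlh (n1 _)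
  have n2 : g ∈ (Ideal.span {Polynomial.X, Polynomial.C (X 1)}) ^ k := by
    refine mem_pow_of p₁ p₂ p₃ p₂ _ ?_ _ _ m2
    intro f hf h
    rw [psi_lin _ _ _ f hf, h]
    refine Ideal.mem_span_pair.mpr ⟨Polynomial.C (C (eval p₁ f)), Polynomial.C (C (eval p₃ f)), ?_⟩
    simp
  have n3 : g ∈ (Ideal.span {Polynomial.X, Polynomial.C (X 0)}) ^ k := by
    refine mem_pow_of p₁ p₂ p₃ p₃ _ ?_ _ _ m3
    intro f hf h
    rw [psi_lin _ _ _ f hf, h]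
    refine Ideal.mem_span_pair.mpr ⟨Polynomial.C (C (eval p₁ f)), Polynomial.C (C (eval p₂ f)), ?_⟩
    simp
  have n4 : g ∈ (Ideal.span {Polynomial.X, Polynomial.C (C b * X 0 - C a * X 1)}) ^ k := by
    refine mem_pow_of p₁ p₂ p₃ p₄ _ ?_ _ _ m4
    intro f hf h
    have h5 := aux_eval_add f hf 0 a b p₁ p₂ p₃
    rw [zero_smul, zero_add, ← h4, h, zero_mul, zero_add] at h5
    have h6 : eval p₃ f = - (a * (b⁻¹ * eval p₂ f)) := by
      field_simp
      linear_combination -h5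
    have h7 : eval p₂ f = b * (b⁻¹ * eval p₂ f) := by field_simp
    rw [psi_lin _ _ _ f hf, h6]
    refine Ideal.mem_span_pair.mpr
      ⟨Polynomial.C (C (eval p₁ f)), Polynomial.C (C (b⁻¹ * eval p₂ f)), ?_⟩
    rw [add_assoc, ← map_add, ← map_mul]
    congr 2
    simp only [map_mul, map_neg]
    have : (C b * C b⁻¹ : MvPolynomial (Fin 2) kk) = 1 := by
      rw [← map_mul, mul_inv_cancel₀ hb, map_one]
    linear_combination (C (eval p₂ f) * X 0) * this
  have b2 := deg_bound a b ha hb (k - g.natDegree) _ _ hl0 hlh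
    (coeff_dvd _ _ _ n3 _) (coeff_dvd _ _ _ n2 _) (coeff_dvd _ _ _ n4 _)
  omega

lemma line_exists (p q : Fin 3 → kk) (h : LinearIndependent kk ![p, q]) :
    ∃ f : MvPolynomial (Fin 3) kk, f ≠ 0 ∧ f.IsHomogeneous 1 ∧ f ∈ pointIdeal p ∧
      f ∈ pointIdeal q := by
  have hc := crossProduct_ne_zero_iff_linearIndependent.mpr h
  set c := crossProduct p q with hcd
  have hh : (∑ i, C (c i) * X i : MvPolynomial (Fin 3) kk).IsHomogeneous 1 := by
    apply IsHomogeneous.sum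
    intro i _
    simpa using (isHomogeneous_C (Fin 3) (c i)).mul (isHomogeneous_X kk i)
  have he : ∀ v, eval v (∑ i, C (c i) * X i : MvPolynomial (Fin 3) kk) = v ⬝ᵥ c := by
    intro v
    simp [dotProduct, mul_comm]
  refine ⟨∑ i, C (c i) * X i, ?_, hh, Ideal.subset_span ⟨hh, ?_⟩, Ideal.subset_span ⟨hh, ?_⟩⟩
  · intro h0
    apply hc
    ext i
    have := he (Pi.single i 1)
    rw [h0] at this
    simpa using this.symm
  · rw [he, hcd, dot_self_cross]
  · rw [he, hcd, dot_cross_self]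

lemma upper (ℓ : MvPolynomial (Fin 3) kk) (hl0 : ℓ ≠ 0) (hl1 : ℓ.IsHomogeneous 1)
    (p₁ p₂ p₃ p₄ : Fin 3 → kk)
    (hon2 : eval p₂ ℓ = 0) (hon3 : eval p₃ ℓ = 0) (hon4 : eval p₄ ℓ = 0)
    (h2 : LinearIndependent kk ![p₁, p₂]) (h3 : LinearIndependent kk ![p₁, p₃])
    (h4 : LinearIndependent kk ![p₁, p₄]) :
    ∃ f : MvPolynomial (Fin 3) kk, f ≠ 0 ∧ f.IsHomogeneous 7 ∧ f ∈ pointIdeal p₁ ^ 6 ∧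
      f ∈ pointIdeal p₂ ^ 3 ∧ f ∈ pointIdeal p₃ ^ 3 ∧ f ∈ pointIdeal p₄ ^ 3 := by
  obtain ⟨f2, a2, b2, c2, d2⟩ := line_exists _ _ h2
  obtain ⟨f3, a3, b3, c3, d3⟩ := line_exists _ _ h3
  obtain ⟨f4, a4, b4, c4, d4⟩ := line_exists _ _ h4
  have l2 : ℓ ∈ pointIdeal p₂ := Ideal.subset_span ⟨hl1, hon2⟩
  have l3 : ℓ ∈ pointIdeal p₃ := Ideal.subset_span ⟨hl1, hon3⟩
  have l4 : ℓ ∈ pointIdeal p₄ := Ideal.subset_span ⟨hl1, hon4⟩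
  have key : ∀ (I : Ideal (MvPolynomial (Fin 3) kk)) (l f u : MvPolynomial (Fin 3) kk),
      l ∈ I → f ∈ I → l * f ^ 2 * u ∈ I ^ 3 := by
    intro I l f u hl hf
    apply Ideal.mul_mem_right
    rw [pow_succ' I 2]
    exact Ideal.mul_mem_mul hl (Ideal.pow_mem_pow hf 2)
  refine ⟨ℓ * (f2 ^ 2 * f3 ^ 2 * f4 ^ 2), ?_, ?_, ?_, ?_, ?_, ?_⟩
  · simp [hl0, a2, a3, a4]
  · exact hl1.mul (((b2.pow 2).mul (b3.pow 2)).mul (b4.pow 2))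
  · apply Ideal.mul_mem_left
    rw [show (6 : ℕ) = 2 + 2 + 2 from rfl, pow_add, pow_add]
    exact Ideal.mul_mem_mul (Ideal.mul_mem_mul (Ideal.pow_mem_pow c2 2) (Ideal.pow_mem_pow c3 2))
      (Ideal.pow_mem_pow c4 2)
  · have := key _ ℓ f2 (f3 ^ 2 * f4 ^ 2) l2 d2
    convert this using 1; ring
  · have := key _ ℓ f3 (f2 ^ 2 * f4 ^ 2) l3 d3
    convert this using 1; ring
  · have := key _ ℓ f4 (f2 ^ 2 * f3 ^ 2) l4 d4
    convert this using 1; ring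

lemma indep_off (ℓ : MvPolynomial (Fin 3) kk) (hl1 : ℓ.IsHomogeneous 1) (p q : Fin 3 → kk)
    (hp : eval p ℓ ≠ 0) (hq : eval q ℓ = 0) (hq0 : q ≠ 0) : LinearIndependent kk ![p, q] := by
  rw [LinearIndependent.pair_iff]
  intro s t h
  have := aux_eval_add ℓ hl1 s t 0 p q 0
  rw [zero_smul, add_zero, h, hq, zero_mul, mul_zero, add_zero, add_zero] at this
  have h0 : eval (0 : Fin 3 → kk) ℓ = 0 := by
    obtain ⟨c, rfl⟩ := aux_lin ℓ hl1
    simp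
  rw [h0] at this
  have hs : s = 0 := by
    rcases mul_eq_zero.mp this.symm with h | h
    · exact h
    · exact absurd h hp
  subst hs
  simpa [hq0] using h

lemma indep_three (ℓ : MvPolynomial (Fin 3) kk) (hl1 : ℓ.IsHomogeneous 1) (p q r : Fin 3 → kk)
    (hp : eval p ℓ ≠ 0) (hq : eval q ℓ = 0) (hr : eval r ℓ = 0) (hq0 : q ≠ 0) (hr0 : r ≠ 0)
    (hqr : ¬ projEq q r) :
    ∀ v : Fin 3 → kk, ∃ a b c : kk, v = a • p + b • q + c • r := by
  have hli : LinearIndependent kk ![p, q, r] := by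
    rw [Fintype.linearIndependent_iff]
    intro g hg
    simp only [Fin.sum_univ_three, Matrix.cons_val] at hg
    have := aux_eval_add ℓ hl1 (g 0) (g 1) (g 2) p q r
    have h0 : eval (0 : Fin 3 → kk) ℓ = 0 := by
      obtain ⟨c, rfl⟩ := aux_lin ℓ hl1
      simp
    rw [hg, hq, hr, h0] at this
    have g0 : g 0 = 0 := by simpa [hp] using this
    rw [g0, zero_smul, zero_add] at hg
    have g2 : g 2 = 0 := by
      by_contra h2
      apply hqr
      have e : r = (-(g 2)⁻¹ * g 1) • q := by
        have : (g 2)⁻¹ • (g 1 • q + g 2 • r) = 0 := by rw [hg, smul_zero]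
        rw [smul_add, smul_smul, smul_smul, inv_mul_cancel₀ h2, one_smul] at this
        rw [neg_mul, neg_smul]
        exact eq_neg_of_add_eq_zero_right this
      refine ⟨_, ?_, e⟩
      intro h
      rw [h, zero_smul] at e
      exact hr0 e
    have g1 : g 1 = 0 := by simpa [g2, hq0] using hg
    intro i
    fin_cases i <;> assumption
  have hsp := hli.span_eq_top_of_card_eq_finrank (by simp)
  intro v
  have hv : v ∈ Submodule.span kk (Set.range ![p, q, r]) := by rw [hsp]; trivial
  rw [Submodule.mem_span_range_iff_exists_fun] at hv
  obtain ⟨c, hc⟩ := hv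
  exact ⟨c 0, c 1, c 2, by rw [← hc]; simp [Fin.sum_univ_three]⟩

end Aux

/-- Let `L = {ℓ = 0}` be a line of `ℙ²`, let `p₂, p₃, p₄` be three
distinct points of `L`, and let `p₁` be a point not on `L`.  Let `Z = 2p₁ + p₂ + p₃ + p₄`.
Then the Waldschmidt constant of `I(Z)` equals `7/3`. -/
theorem waldschmidt_double_point_off_line_three_points
    {kk : Type*} [Field kk] [IsAlgClosed kk]
    (ℓ : MvPolynomial (Fin 3) kk) (hl0 : ℓ ≠ 0) (hl1 : ℓ.IsHomogeneous 1)
    (p₁ p₂ p₃ p₄ : Fin 3 → kk)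
    (hp10 : p₁ ≠ 0) (hp20 : p₂ ≠ 0) (hp30 : p₃ ≠ 0) (hp40 : p₄ ≠ 0)
    (hoff : MvPolynomial.eval p₁ ℓ ≠ 0)
    (hon2 : MvPolynomial.eval p₂ ℓ = 0) (hon3 : MvPolynomial.eval p₃ ℓ = 0)
    (hon4 : MvPolynomial.eval p₄ ℓ = 0)
    (hp23 : ¬ projEq p₂ p₃) (hp24 : ¬ projEq p₂ p₄) (hp34 : ¬ projEq p₃ p₄) :
    (⨅ k : ℕ+, (alpha (pointIdeal p₁ ^ (2 * (k : ℕ)) ⊓ pointIdeal p₂ ^ (k : ℕ) ⊓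
        pointIdeal p₃ ^ (k : ℕ) ⊓ pointIdeal p₄ ^ (k : ℕ)) : ℝ) / ((k : ℕ) : ℝ))
      = 7 / 3 := by
  have : Infinite kk := IsAlgClosed.instInfinite
  have hs := indep_three ℓ hl1 p₁ p₂ p₃ hoff hon2 hon3 hp20 hp30 hp23
  obtain ⟨c, a, b, h4⟩ := hs p₄
  have hc : c = 0 := by
    have := aux_eval_add ℓ hl1 c a b p₁ p₂ p₃
    rw [← h4, hon2, hon3, hon4] at this
    simpa [hoff] using this.symm
  rw [hc, zero_smul, zero_add] at h4
  have hb : b ≠ 0 := by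
    rintro rfl
    rw [zero_smul, add_zero] at h4
    refine hp24 ⟨a, ?_, h4⟩
    rintro rfl
    exact hp40 (by simpa using h4)
  have ha : a ≠ 0 := by
    rintro rfl
    rw [zero_smul, zero_add] at h4
    exact hp34 ⟨b, hb, h4⟩
  obtain ⟨f, f0, f1, f2, f3, f4, f5⟩ := upper ℓ hl0 hl1 p₁ p₂ p₃ p₄ hon2 hon3 hon4
    (indep_off ℓ hl1 _ _ hoff hon2 hp20) (indep_off ℓ hl1 _ _ hoff hon3 hp30)
    (indep_off ℓ hl1 _ _ hoff hon4 hp40)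
  apply le_antisymm
  · have hbd : BddBelow (Set.range fun k : ℕ+ =>
        (alpha (pointIdeal p₁ ^ (2 * (k : ℕ)) ⊓ pointIdeal p₂ ^ (k : ℕ) ⊓
        pointIdeal p₃ ^ (k : ℕ) ⊓ pointIdeal p₄ ^ (k : ℕ)) : ℝ) / ((k : ℕ) : ℝ)) := by
      refine ⟨0, ?_⟩
      rintro _ ⟨k, rfl⟩
      positivity
    refine (ciInf_le hbd 3).trans ?_
    have h7 : alpha (pointIdeal p₁ ^ (2 * ((3 : ℕ+) : ℕ)) ⊓ pointIdeal p₂ ^ ((3 : ℕ+) : ℕ) ⊓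
        pointIdeal p₃ ^ ((3 : ℕ+) : ℕ) ⊓ pointIdeal p₄ ^ ((3 : ℕ+) : ℕ)) ≤ 7 :=
      Nat.sInf_le ⟨f, ⟨⟨⟨f2, f3⟩, f4⟩, f5⟩, f0, f1⟩
    have h7' := (Nat.cast_le (α := ℝ)).mpr h7
    have e3 : (((3 : ℕ+) : ℕ) : ℝ) = 3 := by norm_num
    rw [e3]
    push_cast at h7' ⊢
    linarith
  · apply le_ciInf
    intro k
    have hk : (0 : ℝ) < ((k : ℕ) : ℝ) := by exact_mod_cast k.pos
    rw [div_le_div_iff₀ (by norm_num) hk]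
    have hne : {d : ℕ | ∃ f ∈ (pointIdeal p₁ ^ (2 * (k : ℕ)) ⊓ pointIdeal p₂ ^ (k : ℕ) ⊓
        pointIdeal p₃ ^ (k : ℕ) ⊓ pointIdeal p₄ ^ (k : ℕ)), f ≠ 0 ∧
        MvPolynomial.IsHomogeneous f d}.Nonempty := by
      have key : ∀ (I : Ideal (MvPolynomial (Fin 3) kk)) (m n : ℕ), f ∈ I ^ m → n ≤ m * k →
          f ^ (k : ℕ) ∈ I ^ n := by
        intro I m n h hn
        refine Ideal.pow_le_pow_right hn ?_
        rw [pow_mul]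
        exact Ideal.pow_mem_pow h _
      exact ⟨7 * k, f ^ (k : ℕ), ⟨⟨⟨key _ _ _ f2 (by omega), key _ _ _ f3 (by omega)⟩,
        key _ _ _ f4 (by omega)⟩, key _ _ _ f5 (by omega)⟩, pow_ne_zero _ f0, f1.pow _⟩
    obtain ⟨g, ⟨⟨⟨g1, g2⟩, g3⟩, g4⟩, g0, gh⟩ := Nat.sInf_mem hne
    have := lower p₁ p₂ p₃ p₄ hs a b ha hb h4 k _ g g0 gh g1 g2 g3 g4
    have h' := (Nat.cast_le (α := ℝ)).mpr this
    push_cast at h'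
    unfold alpha
    linarith
end
end
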